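/- Sufficiency half of the optimality condition: let S and A be nonempty finite types, P : A → Matrix S S ℝ with each P a row-stochastic, R : S → ℝ, and γ ∈ ℝ with 0 ≤ γ < 1. For a deterministic policy π : S → A let P^π be the matrix with P^π(s,j) = (P (π s))(s,j) and let V^π = (I − γ·P^π)⁻¹ *ᵥ R. If for every action a ∈ A the vector (P^π − P a) *ᵥ ((I − γ·P^π)⁻¹ *ᵥ R) has all components nonnegative, then for every deterministic policy π' : S → A we have V^π(s) ≥ V^{π'}(s) for all s ∈ S. -/

import Mathlib

open Matrix BigOperators

/-- A matrix is row-stochastic if all entries are nonnegative and every row sums to 1. -/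
def RowStochastic {S : Type*} [Fintype S] (P : Matrix S S ℝ) : Prop :=
  (∀ i j, 0 ≤ P i j) ∧ (∀ i, ∑ j, P i j = 1)

/-- The transition matrix `P^π` of a deterministic policy `π`:
`P^π(s, j) = (P (π s))(s, j)`. -/
def polMat {S A : Type*} (P : A → Matrix S S ℝ) (π : S → A) : Matrix S S ℝ :=
  Matrix.of fun s j => P (π s) s j

/-- The value vector `V^π = (I - γ • P^π)⁻¹ *ᵥ R` of a deterministic policy `π`. -/
noncomputable def polVal {S A : Type*} [Fintype S] [DecidableEq S]
    (P : A → Matrix S S ℝ) (γ : ℝ) (R : S → ℝ) (π : S → A) : S → ℝ :=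
  (1 - γ • polMat P π)⁻¹ *ᵥ R

theorem polMat_rowStochastic {S A : Type*} [Fintype S] (P : A → Matrix S S ℝ)
    (hP : ∀ a, RowStochastic (P a)) (π : S → A) : RowStochastic (polMat P π) :=
  ⟨fun i j => (hP (π i)).1 i j, fun i => (hP (π i)).2 i⟩

/-- Minimum principle: a vector dominating its discounted average is nonnegative. -/
theorem nonneg_of_supersolution {S : Type*} [Fintype S] [Nonempty S] (Q : Matrix S S ℝ)
    (hQ : RowStochastic Q) (γ : ℝ) (hγ0 : 0 ≤ γ) (hγ1 : γ < 1) (d : S → ℝ)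
    (hd : ∀ s, γ * (Q *ᵥ d) s ≤ d s) : ∀ s, 0 ≤ d s := by
  obtain ⟨m, hm⟩ := Finite.exists_min d
  have h1 : d m ≤ (Q *ᵥ d) m := by
    calc d m = ∑ j, Q m j * d m := by rw [← Finset.sum_mul, hQ.2 m, one_mul]
      _ ≤ ∑ j, Q m j * d j :=
        Finset.sum_le_sum fun j _ => mul_le_mul_of_nonneg_left (hm j) (hQ.1 m j)
  have h2 := mul_le_mul_of_nonneg_left h1 hγ0
  have h3 := hd m
  have h4 : 0 ≤ d m := by nlinarith
  exact fun s => h4.trans (hm s)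

theorem isUnit_one_sub {S : Type*} [Fintype S] [DecidableEq S] [Nonempty S] (Q : Matrix S S ℝ)
    (hQ : RowStochastic Q) (γ : ℝ) (hγ0 : 0 ≤ γ) (hγ1 : γ < 1) : IsUnit (1 - γ • Q) := by
  rw [← Matrix.mulVec_injective_iff_isUnit]
  intro v w hvw
  have key : ∀ s, v s - γ * (Q *ᵥ v) s = w s - γ * (Q *ᵥ w) s := by
    intro s
    have := congrFun hvw s
    simpa [Matrix.sub_mulVec, Matrix.smul_mulVec] using this
  have a := nonneg_of_supersolution Q hQ γ hγ0 hγ1 (v - w) (fun s => by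
    have := key s
    simp only [Matrix.mulVec_sub, Pi.sub_apply]
    linarith)
  have b := nonneg_of_supersolution Q hQ γ hγ0 hγ1 (w - v) (fun s => by
    have := key s
    simp only [Matrix.mulVec_sub, Pi.sub_apply]
    linarith)
  ext s
  have := a s
  have := b s
  simp only [Pi.sub_apply] at *
  linarith

/-- The Bellman equation for a fixed policy. -/
theorem polVal_eq {S A : Type*} [Fintype S] [DecidableEq S] [Nonempty S]
    (P : A → Matrix S S ℝ) (hP : ∀ a, RowStochastic (P a))
    (R : S → ℝ) (γ : ℝ) (hγ0 : 0 ≤ γ) (hγ1 : γ < 1) (π : S → A) (s : S) :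
    polVal P γ R π s - γ * (polMat P π *ᵥ polVal P γ R π) s = R s := by
  have hu := isUnit_one_sub _ (polMat_rowStochastic P hP π) γ hγ0 hγ1
  have : (1 - γ • polMat P π) *ᵥ polVal P γ R π = R := by
    rw [polVal, Matrix.mulVec_mulVec,
      Matrix.mul_nonsing_inv _ ((Matrix.isUnit_iff_isUnit_det _).1 hu), Matrix.one_mulVec]
  simpa [Matrix.sub_mulVec, Matrix.smul_mulVec] using congrFun this s

/-- Sufficiency half of the optimality condition. -/
theorem optimal_of_nonneg_advantage {S A : Type*} [Fintype S] [DecidableEq S] [Nonempty S]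
    [Fintype A] [Nonempty A] (P : A → Matrix S S ℝ) (hP : ∀ a, RowStochastic (P a))
    (R : S → ℝ) (γ : ℝ) (hγ0 : 0 ≤ γ) (hγ1 : γ < 1) (π : S → A)
    (h : ∀ a : A, ∀ s : S, 0 ≤ ((polMat P π - P a) *ᵥ ((1 - γ • polMat P π)⁻¹ *ᵥ R)) s) :
    ∀ π' : S → A, ∀ s : S, polVal P γ R π' s ≤ polVal P γ R π s := by
  intro π' s
  have hd := nonneg_of_supersolution (polMat P π') (polMat_rowStochastic P hP π') γ hγ0 hγ1
    (polVal P γ R π - polVal P γ R π') (fun t => by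
      have e1 := polVal_eq P hP R γ hγ0 hγ1 π t
      have e2 := polVal_eq P hP R γ hγ0 hγ1 π' t
      have h0 : 0 ≤ ((polMat P π - P (π' t)) *ᵥ polVal P γ R π) t := h (π' t) t
      have h1 : (P (π' t) *ᵥ polVal P γ R π) t = (polMat P π' *ᵥ polVal P γ R π) t := rfl
      rw [Matrix.sub_mulVec, Pi.sub_apply, h1] at h0
      have h2 := mul_nonneg hγ0 h0
      simp only [Matrix.mulVec_sub, Pi.sub_apply]
      linarith)
  have := hd s
  simp only [Pi.sub_apply] at this
  linarith
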